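/- arXiv:1312.7729 — 5 statements merged into one kernel-verified Lean document; each statement's English description precedes it below -/
import Mathlib

section
/- For a,b odd positive integers, real q with 0<q<1, a complex number s, a real x>0, a positive integer r, and a Dirichlet character χ of odd conductor d, the following symmetry identity holds: [2]_{q^b}^r · [b]_q^s · Σ_{j_1,...,j_r=0}^{da-1} (-1)^{j_1+⋯+j_r} (Π_{l=1}^r χ(j_l)) q^{b(j_1+⋯+j_r)} l_{q^a,r}(s, bx + (b/a)(j_1+⋯+j_r) | χ) = [2]_{q^a}^r · [a]_q^s · Σ_{j_1,...,j_r=0}^{db-1} (-1)^{j_1+⋯+j_r} (Π_{l=1}^r χ(j_l)) q^{a(j_1+⋯+j_r)} l_{q^b,r}(s, ax + (a/b)(j_1+⋯+j_r) | χ). Here powers with complex exponent s are taken of positive real bases. -/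
open scoped BigOperators

/-- The `q`-number `[x]_q = (1 - q^x)/(1 - q)` for real `q` and real `x`. -/
noncomputable def qNum (q x : ℝ) : ℝ := (1 - q ^ x) / (1 - q)

/-- Generalized `q`-Euler polynomial of order `r` attached to a Dirichlet character `χ`:
`E^{(r)}_{n,χ,q}(x) = [2]_q^r Σ' (-q)^{m₁+⋯+m_r} (Π χ(mᵢ)) [m₁+⋯+m_r+x]_q^n`. -/
noncomputable def qEuler (r : ℕ) {d : ℕ} (χ : DirichletCharacter ℂ d) (q : ℝ)
    (n : ℕ) (x : ℝ) : ℂ :=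
  ((qNum q 2 : ℝ) : ℂ) ^ r *
    ∑' m : Fin r → ℕ,
      ((-(q : ℂ)) ^ (∑ i, m i) * (∏ i, χ ((m i : ZMod d))) *
        ((qNum q ((∑ i, m i : ℕ) + x) : ℝ) : ℂ) ^ n)

/-- Dirichlet-type multiple `q`-`l`-function
`l_{q,r}(s,x|χ) = [2]_q^r Σ' (-q)^{m₁+⋯+m_r} (Π χ(mᵢ)) [m₁+⋯+m_r+x]_q^{-s}`,
with principal complex powers of positive real bases. -/
noncomputable def qL (q : ℝ) (r : ℕ) {d : ℕ} (χ : DirichletCharacter ℂ d)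
    (s : ℂ) (x : ℝ) : ℂ :=
  ((qNum q 2 : ℝ) : ℂ) ^ r *
    ∑' m : Fin r → ℕ,
      ((-(q : ℂ)) ^ (∑ i, m i) * (∏ i, χ ((m i : ZMod d))) *
        ((qNum q ((∑ i, m i : ℕ) + x) : ℝ) : ℂ) ^ (-s))

/-- The `q`-power sum
`S^{(r)}_{n,i,q}(a|χ) = Σ_{j₁,…,j_r=0}^{a-1} (-1)^{j₁+⋯+j_r} (Π χ(j_l)) q^{(j₁+⋯+j_r)(n-i+1)} [j₁+⋯+j_r]_q^i`. -/
noncomputable def qS (r : ℕ) {d : ℕ} (χ : DirichletCharacter ℂ d)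
    (n i : ℕ) (q : ℝ) (a : ℕ) : ℂ :=
  ∑ j ∈ Fintype.piFinset (fun _ : Fin r => Finset.range a),
    ((-1 : ℂ) ^ (∑ l, j l) * (∏ l, χ ((j l : ZMod d))) *
      (q : ℂ) ^ ((∑ l, j l) * (n - i + 1)) *
      ((qNum q ((∑ l, j l : ℕ)) : ℝ) : ℂ) ^ i)


namespace SymQL

lemma qNum_pos {q x : ℝ} (hq0 : 0 < q) (hq1 : q < 1) (hx : 0 < x) : 0 < qNum q x := by
  unfold qNum
  have := Real.rpow_lt_one hq0.le hq1 hx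
  exact div_pos (by linarith) (by linarith)

lemma summable_geom (r : ℕ) {q : ℝ} (hq0 : 0 < q) (hq1 : q < 1) :
    Summable (fun m : Fin r → ℕ => q ^ (∑ i, m i)) := by
  classical
  refine summable_of_sum_le (c := ((1 - q)⁻¹) ^ r) (fun m => by positivity) ?_
  intro u
  obtain ⟨N, hN⟩ : ∃ N, u ⊆ Fintype.piFinset (fun _ : Fin r => Finset.range N) := by
    refine ⟨u.sup (fun m => ∑ i, m i) + 1, fun m hm => ?_⟩
    rw [Fintype.mem_piFinset]
    intro i
    rw [Finset.mem_range, Nat.lt_succ_iff]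
    exact (Finset.single_le_sum (f := m) (fun _ _ => Nat.zero_le _) (Finset.mem_univ i)).trans
      (Finset.le_sup (f := fun m : Fin r → ℕ => ∑ i, m i) hm)
  calc ∑ m ∈ u, q ^ (∑ i, m i)
      ≤ ∑ m ∈ Fintype.piFinset (fun _ : Fin r => Finset.range N), q ^ (∑ i, m i) :=
        Finset.sum_le_sum_of_subset_of_nonneg hN (fun _ _ _ => by positivity)
    _ = ∏ _i : Fin r, ∑ k ∈ Finset.range N, q ^ k := by
        rw [Finset.prod_univ_sum]
        refine Finset.sum_congr rfl fun m _ => ?_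
        rw [Finset.prod_pow_eq_pow_sum]
    _ ≤ ∏ _i : Fin r, (1 - q)⁻¹ := by
        refine Finset.prod_le_prod (fun _ _ => by positivity) fun _ _ => ?_
        rw [← tsum_geometric_of_lt_one hq0.le hq1]
        exact (summable_geometric_of_lt_one hq0.le hq1).sum_le_tsum _ (fun _ _ => by positivity)
    _ = _ := by simp

lemma summable_qL {q : ℝ} (hq0 : 0 < q) (hq1 : q < 1) (r : ℕ) {d : ℕ}
    (χ : DirichletCharacter ℂ d) (s : ℂ) {x : ℝ} (hx : 0 < x) :
    Summable (fun m : Fin r → ℕ => (-(q : ℂ)) ^ (∑ i, m i) * (∏ i, χ ((m i : ZMod d))) *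
        ((qNum q ((∑ i, m i : ℕ) + x) : ℝ) : ℂ) ^ (-s)) := by
  set C : ℝ := (qNum q x) ^ (-s).re + ((1 - q)⁻¹) ^ (-s).re with hC
  refine Summable.of_norm_bounded ((summable_geom r hq0 hq1).mul_right C) ?_
  intro m
  have hM : (0:ℝ) ≤ ((∑ i, m i : ℕ) : ℝ) := Nat.cast_nonneg _
  generalize hMe : ((∑ i, m i : ℕ) : ℝ) = M at hM
  have hpos : 0 < qNum q (M + x) := qNum_pos hq0 hq1 (by linarith)
  have hpos0 : 0 < qNum q x := qNum_pos hq0 hq1 hx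
  have h1q : 0 < 1 - q := by linarith
  have hlow : qNum q x ≤ qNum q (M + x) := by
    unfold qNum
    have := Real.rpow_le_rpow_of_exponent_ge hq0 hq1.le (show x ≤ M + x by linarith)
    gcongr
  have hup : qNum q (M + x) ≤ (1 - q)⁻¹ := by
    unfold qNum
    rw [div_eq_mul_inv]
    have := Real.rpow_pos_of_pos hq0 (M + x)
    have h2 : 0 < (1 - q)⁻¹ := by positivity
    nlinarith
  rw [norm_mul, norm_mul, norm_pow, norm_neg, Complex.norm_real, Real.norm_of_nonneg hq0.le,
    Complex.norm_cpow_eq_rpow_re_of_pos hpos, norm_prod]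
  have hχ : ∏ i, ‖χ ((m i : ZMod d))‖ ≤ 1 :=
    Finset.prod_le_one (fun _ _ => norm_nonneg _) (fun _ _ => χ.norm_le_one _)
  have hb : qNum q (M + x) ^ (-s).re ≤ C := by
    have e1 : 0 < (qNum q x) ^ (-s).re := Real.rpow_pos_of_pos hpos0 _
    have e2 : 0 < ((1 - q)⁻¹) ^ (-s).re := Real.rpow_pos_of_pos (by positivity) _
    rcases le_total 0 (-s).re with h | h
    · have := Real.rpow_le_rpow hpos.le hup h
      linarith
    · have := Real.rpow_le_rpow_of_nonpos hpos0 hlow h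
      linarith
  have e3 : 0 < qNum q (M + x) ^ (-s).re := Real.rpow_pos_of_pos hpos _
  calc q ^ (∑ i, m i) * (∏ i, ‖χ ((m i : ZMod d))‖) * qNum q (M + x) ^ (-s).re
      ≤ q ^ (∑ i, m i) * 1 * C := by gcongr
    _ = _ := by ring

lemma sum_piFinset_range (r N : ℕ) (f : (Fin r → ℕ) → ℂ) :
    ∑ j ∈ Fintype.piFinset (fun _ : Fin r => Finset.range N), f j =
      ∑ j : Fin r → Fin N, f (fun l => (j l : ℕ)) := by
  symm
  refine Finset.sum_bij (fun j _ => fun l => (j l : ℕ)) ?_ ?_ ?_ ?_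
  · intro j _
    simp
  · intro j _ k _ h
    funext l
    exact Fin.ext (congrFun h l)
  · intro j hj
    rw [Fintype.mem_piFinset] at hj
    exact ⟨fun l => ⟨j l, Finset.mem_range.1 (hj l)⟩, Finset.mem_univ _, rfl⟩
  · intro j _
    rfl

lemma tsum_residue (r N : ℕ) (hN : 0 < N) (f : (Fin r → ℕ) → ℂ) (hf : Summable f) :
    ∑' m, f m = ∑ i : Fin r → Fin N, ∑' n : Fin r → ℕ, f (fun l => n l * N + (i l : ℕ)) := by
  have : NeZero N := ⟨hN.ne'⟩
  let e : (Fin r → ℕ) ≃ (Fin r → Fin N) × (Fin r → ℕ) :=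
    ((Equiv.piCongrRight (fun _ : Fin r => Nat.divModEquiv N)).trans
      (Equiv.arrowProdEquivProdArrow (Fin r) (fun _ => ℕ) (fun _ => Fin N))).trans
        (Equiv.prodComm _ _)
  have hs : Summable (fun c => f (e.symm c)) := e.symm.summable_iff.2 hf
  rw [← e.symm.tsum_eq f, Summable.tsum_prod hs, tsum_fintype]
  rfl

lemma sym_sum (r A B : ℕ) (hA : 0 < A) (hB : 0 < B) (F G : (Fin r → ℕ) → (Fin r → ℕ) → ℂ)
    (hF : ∀ j, Summable (F j)) (hG : ∀ j, Summable (G j))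
    (h : ∀ i j n : Fin r → ℕ, F j (fun l => n l * B + i l) = G i (fun l => n l * A + j l)) :
    ∑ j ∈ Fintype.piFinset (fun _ : Fin r => Finset.range A), ∑' m, F j m =
    ∑ j ∈ Fintype.piFinset (fun _ : Fin r => Finset.range B), ∑' m, G j m := by
  rw [sum_piFinset_range, sum_piFinset_range]
  simp_rw [fun j => tsum_residue r B hB (F j) (hF j), fun j => tsum_residue r A hA (G j) (hG j)]
  rw [Finset.sum_comm]
  simp_rw [← h]

lemma weight (a b : ℕ) (ha0 : 0 < a) (hb0 : 0 < b) (q : ℝ) (hq0 : 0 < q) (hq1 : q < 1)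
    (s : ℂ) (x : ℝ) (hx : 0 < x) (J M : ℕ) :
    ((qNum q b : ℝ) : ℂ) ^ s *
      ((qNum (q ^ a) ((M : ℝ) + (b * x + ((b : ℝ) / a) * (J : ℝ))) : ℝ) : ℂ) ^ (-s) =
    ((((1 - q ^ a) * (1 - q ^ b) / ((1 - q) *
      (1 - q ^ ((a : ℝ) * b * x + ((b * J + a * M : ℕ) : ℝ))))) : ℝ) : ℂ) ^ s := by
  have ha' : (0:ℝ) < a := by exact_mod_cast ha0
  have hb' : (0:ℝ) < b := by exact_mod_cast hb0
  have hqa0 : 0 < q ^ a := by positivity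
  have hqa1 : q ^ a < 1 := pow_lt_one₀ hq0.le hq1 ha0.ne'
  have hqb1 : q ^ b < 1 := pow_lt_one₀ hq0.le hq1 hb0.ne'
  have hP1 : 0 < qNum q b := qNum_pos hq0 hq1 hb'
  have hP2 : 0 < qNum (q ^ a) ((M : ℝ) + (b * x + ((b : ℝ) / a) * (J : ℝ))) :=
    qNum_pos hqa0 hqa1 (by positivity)
  have hexp : (q ^ a) ^ ((M : ℝ) + (b * x + ((b : ℝ) / a) * (J : ℝ))) =
      q ^ ((a : ℝ) * b * x + ((b * J + a * M : ℕ) : ℝ)) := by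
    rw [← Real.rpow_natCast q a, ← Real.rpow_mul hq0.le]
    congr 1
    push_cast
    field_simp
    ring
  have hE : q ^ ((a : ℝ) * b * x + ((b * J + a * M : ℕ) : ℝ)) < 1 :=
    Real.rpow_lt_one hq0.le hq1 (by positivity)
  have hE' := sub_pos.2 hE
  have h1q := sub_pos.2 hq1
  have hqa' := sub_pos.2 hqa1
  rw [Complex.cpow_neg, ← Complex.inv_cpow_ofReal_nonneg hP2.le, ← Complex.ofReal_inv,
    ← Complex.mul_cpow_ofReal_nonneg hP1.le (inv_nonneg.2 hP2.le), ← Complex.ofReal_mul]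
  congr 2
  unfold qNum
  rw [hexp, Real.rpow_natCast]
  field_simp

/-- The individual term of the double sum. -/
noncomputable def T (a b : ℕ) (q : ℝ) (s : ℂ) (x : ℝ) {r d : ℕ} (χ : DirichletCharacter ℂ d)
    (j m : Fin r → ℕ) : ℂ :=
  ((qNum q b : ℝ) : ℂ) ^ s * ((-1 : ℂ) ^ (∑ l, j l) * (∏ l, χ ((j l : ZMod d))) *
    (q : ℂ) ^ (b * ∑ l, j l)) *
    ((-((q ^ a : ℝ) : ℂ)) ^ (∑ i, m i) * (∏ i, χ ((m i : ZMod d))) *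
      ((qNum (q ^ a) ((∑ i, m i : ℕ) +
        (b * x + ((b : ℝ) / a) * ((∑ l, j l : ℕ) : ℝ))) : ℝ) : ℂ) ^ (-s))

lemma T_eq (a b : ℕ) (ha0 : 0 < a) (hb0 : 0 < b) (q : ℝ) (hq0 : 0 < q) (hq1 : q < 1)
    (s : ℂ) (x : ℝ) (hx : 0 < x) {r d : ℕ} (χ : DirichletCharacter ℂ d) (j m : Fin r → ℕ) :
    T a b q s x χ j m = (-1 : ℂ) ^ (∑ l, j l + ∑ l, m l) *
      ((∏ l, χ ((j l : ZMod d))) * (∏ l, χ ((m l : ZMod d)))) *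
      (q : ℂ) ^ (b * ∑ l, j l + a * ∑ l, m l) *
      ((((1 - q ^ a) * (1 - q ^ b) / ((1 - q) *
      (1 - q ^ ((a : ℝ) * b * x + ((b * (∑ l, j l) + a * (∑ l, m l) : ℕ) : ℝ))))) : ℝ) : ℂ) ^ s := by
  rw [← weight a b ha0 hb0 q hq0 hq1 s x hx]
  unfold T
  rw [neg_pow (((q ^ a : ℝ) : ℂ)), Complex.ofReal_pow, ← pow_mul, pow_add, pow_add]
  ring

lemma T_sym (a b : ℕ) (ha0 : 0 < a) (hb0 : 0 < b) (ha : Odd a) (hb : Odd b)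
    (q : ℝ) (hq0 : 0 < q) (hq1 : q < 1)
    (s : ℂ) (x : ℝ) (hx : 0 < x) {r d : ℕ} (hd : Odd d) (χ : DirichletCharacter ℂ d)
    (i j n : Fin r → ℕ) :
    T a b q s x χ j (fun l => n l * (d * b) + i l) =
      T b a q s x χ i (fun l => n l * (d * a) + j l) := by
  rw [T_eq a b ha0 hb0 q hq0 hq1 s x hx, T_eq b a hb0 ha0 q hq0 hq1 s x hx]
  have hc : ∀ (c : ℕ) (k : Fin r → ℕ),
      ∏ l, χ (((n l * (d * c) + k l : ℕ) : ZMod d)) = ∏ l, χ ((k l : ZMod d)) := by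
    intro c k
    simp
  have hsum : ∀ (c : ℕ) (k : Fin r → ℕ),
      ∑ l, (n l * (d * c) + k l) = (d * c) * (∑ l, n l) + ∑ l, k l := by
    intro c k
    rw [Finset.sum_add_distrib, Finset.mul_sum]
    simp_rw [mul_comm]
  rw [hc, hc, hsum, hsum]
  generalize (∑ l, n l) = N
  generalize (∑ l, i l) = I
  generalize (∑ l, j l) = J
  have he : b * J + a * (d * b * N + I) = a * I + b * (d * a * N + J) := by ring
  have hsgn : (-1 : ℂ) ^ (J + (d * b * N + I)) = (-1 : ℂ) ^ (I + (d * a * N + J)) := by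
    simp only [pow_add, pow_mul, hd.neg_one_pow, ha.neg_one_pow, hb.neg_one_pow]
    ring
  rw [he, hsgn, mul_comm (a : ℝ) b, mul_comm (1 - q ^ a), mul_comm (∏ l, χ ((j l : ZMod d)))]

lemma T_summable (a b : ℕ) (ha0 : 0 < a) (hb0 : 0 < b) (q : ℝ) (hq0 : 0 < q) (hq1 : q < 1)
    (s : ℂ) (x : ℝ) (hx : 0 < x) {r d : ℕ} (χ : DirichletCharacter ℂ d) (j : Fin r → ℕ) :
    Summable (T a b q s x χ j) := by
  unfold T
  refine Summable.mul_left _ (summable_qL (by positivity) (pow_lt_one₀ hq0.le hq1 ha0.ne') r χ s ?_)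
  have hb' : (0:ℝ) < b := by exact_mod_cast hb0
  positivity

lemma side (a b : ℕ) (q : ℝ) (s : ℂ) (x : ℝ) (r d A : ℕ) (χ : DirichletCharacter ℂ d) :
    ((qNum (q ^ b) 2 : ℝ) : ℂ) ^ r * ((qNum q b : ℝ) : ℂ) ^ s *
      ∑ j ∈ Fintype.piFinset (fun _ : Fin r => Finset.range A),
        ((-1 : ℂ) ^ (∑ l, j l) * (∏ l, χ ((j l : ZMod d))) * (q : ℂ) ^ (b * ∑ l, j l) *
          qL (q ^ a) r χ s (b * x + ((b : ℝ) / a) * (∑ l, j l))) =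
    (((qNum (q ^ b) 2 : ℝ) : ℂ) ^ r * ((qNum (q ^ a) 2 : ℝ) : ℂ) ^ r) *
      ∑ j ∈ Fintype.piFinset (fun _ : Fin r => Finset.range A), ∑' m, T a b q s x χ j m := by
  rw [Finset.mul_sum, Finset.mul_sum]
  refine Finset.sum_congr rfl fun j _ => ?_
  unfold T qL
  rw [tsum_mul_left]
  push_cast
  ring

end SymQL

/-- Theorem 1: symmetry identity for the Dirichlet-type multiple `q`-`l`-function. -/
theorem symmetry_qL (a b : ℕ) (ha0 : 0 < a) (ha : Odd a) (hb0 : 0 < b) (hb : Odd b)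
    (q : ℝ) (hq0 : 0 < q) (hq1 : q < 1) (s : ℂ) (x : ℝ) (hx : 0 < x)
    (r : ℕ) (hr : 0 < r) (d : ℕ) (hd : Odd d) (χ : DirichletCharacter ℂ d) :
    ((qNum (q ^ b) 2 : ℝ) : ℂ) ^ r * ((qNum q b : ℝ) : ℂ) ^ s *
      ∑ j ∈ Fintype.piFinset (fun _ : Fin r => Finset.range (d * a)),
        ((-1 : ℂ) ^ (∑ l, j l) * (∏ l, χ ((j l : ZMod d))) * (q : ℂ) ^ (b * ∑ l, j l) *
          qL (q ^ a) r χ s (b * x + ((b : ℝ) / a) * (∑ l, j l))) =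
    ((qNum (q ^ a) 2 : ℝ) : ℂ) ^ r * ((qNum q a : ℝ) : ℂ) ^ s *
      ∑ j ∈ Fintype.piFinset (fun _ : Fin r => Finset.range (d * b)),
        ((-1 : ℂ) ^ (∑ l, j l) * (∏ l, χ ((j l : ZMod d))) * (q : ℂ) ^ (a * ∑ l, j l) *
          qL (q ^ b) r χ s (a * x + ((a : ℝ) / b) * (∑ l, j l))) := by
  rw [SymQL.side a b, SymQL.side b a, mul_comm (((qNum (q ^ a) 2 : ℝ) : ℂ) ^ r)]
  congr 1
  exact SymQL.sym_sum r (d * a) (d * b) (Nat.mul_pos hd.pos ha0) (Nat.mul_pos hd.pos hb0) _ _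
    (SymQL.T_summable a b ha0 hb0 q hq0 hq1 s x hx χ)
    (SymQL.T_summable b a hb0 ha0 q hq0 hq1 s x hx χ)
    (SymQL.T_sym a b ha0 hb0 ha hb q hq0 hq1 s x hx hd χ)
end

section
/- For every nonnegative integer n, odd positive integers a and b, real q with 0<q<1, real x>0, a positive integer r, and a Dirichlet character χ of odd conductor d: [2]_{q^b}^r · [a]_q^n · Σ_{j_1,...,j_r=0}^{da-1} (-1)^{j_1+⋯+j_r} (Π_{l=1}^r χ(j_l)) q^{b(j_1+⋯+j_r)} E^{(r)}_{n,χ,q^a}(bx + (b/a)(j_1+⋯+j_r)) = [2]_{q^a}^r · [b]_q^n · Σ_{j_1,...,j_r=0}^{db-1} (-1)^{j_1+⋯+j_r} (Π_{l=1}^r χ(j_l)) q^{a(j_1+⋯+j_r)} E^{(r)}_{n,χ,q^b}(ax + (a/b)(j_1+⋯+j_r)). -/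
open scoped BigOperators

theorem qE_summable_geom (q : ℝ) (h0 : 0 < q) (h1 : q < 1) (r : ℕ) :
    Summable (fun m : Fin r → ℕ => q ^ (∑ i, m i)) := by
  induction r with
  | zero => exact Summable.of_finite
  | succ r ih =>
    have hg := summable_geometric_of_lt_one h0.le h1
    have := hg.mul_of_nonneg ih (fun _ => by positivity) (fun _ => by positivity)
    rw [← (Fin.consEquiv (fun _ : Fin (r+1) => ℕ)).summable_iff]
    refine this.congr ?_
    rintro ⟨k, m⟩
    simp [Fin.consEquiv, Fin.sum_univ_succ, pow_add]

theorem qE_split (N r : ℕ) (hN : 0 < N) (f : (Fin r → ℕ) → ℂ) (hf : Summable f) :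
    ∑' m, f m = ∑ i ∈ Fintype.piFinset (fun _ : Fin r => Finset.range N),
      ∑' k : Fin r → ℕ, f (fun l => i l + N * k l) := by
  haveI : NeZero N := ⟨hN.ne'⟩
  let e : (Fin r → Fin N) × (Fin r → ℕ) ≃ (Fin r → ℕ) :=
    { toFun := fun p l => p.1 l + N * p.2 l
      invFun := fun m => (fun l => ⟨m l % N, Nat.mod_lt _ hN⟩, fun l => m l / N)
      left_inv := by
        rintro ⟨i, k⟩
        refine Prod.ext ?_ ?_
        · funext l
          apply Fin.ext
          simp [Nat.mod_eq_of_lt (i l).2]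
        · funext l
          simp [Nat.add_mul_div_left _ _ hN, Nat.div_eq_of_lt (i l).2]
      right_inv := by
        intro m
        funext l
        exact Nat.mod_add_div _ _ }
  have hs : Summable (f ∘ e) := (e.summable_iff).2 hf
  rw [← e.tsum_eq f]
  have := hs.tsum_prod
  simp only [Function.comp_def] at this
  rw [this, tsum_fintype]
  refine Finset.sum_bij (fun i _ l => (i l : ℕ)) ?_ ?_ ?_ ?_
  · intro i _
    simp
  · intro i _ i' _ h
    funext l
    exact Fin.ext (congrFun h l)
  · intro m hm
    simp only [Fintype.mem_piFinset, Finset.mem_range] at hm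
    exact ⟨fun l => ⟨m l, hm l⟩, Finset.mem_univ _, rfl⟩
  · intro i _
    rfl

/-- The common summand. -/
noncomputable def qEG {r d : ℕ} (χ : DirichletCharacter ℂ d) (n a b : ℕ) (q x : ℝ)
    (j m : Fin r → ℕ) : ℂ :=
  (-1 : ℂ) ^ (∑ l, j l) * (-1 : ℂ) ^ (∑ l, m l) *
    ((∏ l, χ ((j l : ZMod d))) * (∏ l, χ ((m l : ZMod d)))) *
    (q : ℂ) ^ (b * (∑ l, j l) + a * (∑ l, m l)) *
    ((qNum q (((b * (∑ l, j l) + a * (∑ l, m l) : ℕ) : ℝ) + a * b * x) : ℝ) : ℂ) ^ n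

theorem qEG_symm {r d : ℕ} (χ : DirichletCharacter ℂ d) (n a b : ℕ) (q x : ℝ)
    (j m : Fin r → ℕ) : qEG χ n a b q x j m = qEG χ n b a q x m j := by
  unfold qEG
  rw [add_comm (b * _), mul_comm (a : ℝ) b, mul_comm ((-1 : ℂ) ^ _), mul_comm (∏ l, χ _)]

theorem qE_neg_one (r N : ℕ) (hN : Odd N) (i k : Fin r → ℕ) :
    (-1 : ℂ) ^ (∑ l, (i l + N * k l)) = (-1) ^ (∑ l, i l) * (-1) ^ (∑ l, k l) := by
  rw [Finset.sum_add_distrib, ← Finset.mul_sum, pow_add, pow_mul, hN.neg_one_pow]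

theorem qE_char {d : ℕ} (χ : DirichletCharacter ℂ d) (r a : ℕ) (i k : Fin r → ℕ) :
    (∏ l, χ (((i l + d * a * k l : ℕ) : ZMod d))) = ∏ l, χ ((i l : ZMod d)) := by
  refine Finset.prod_congr rfl fun l _ => ?_
  simp

theorem qEG_shift {r d : ℕ} (χ : DirichletCharacter ℂ d) (n a b : ℕ) (q x : ℝ)
    (ha : Odd a) (hb : Odd b) (hd : Odd d) (j i k : Fin r → ℕ) :
    qEG χ n a b q x j (fun l => i l + d * b * k l) =
      qEG χ n a b q x (fun l => j l + d * a * k l) i := by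
  have h : b * (∑ l, j l) + a * (∑ l, (i l + d * b * k l)) =
      b * (∑ l, (j l + d * a * k l)) + a * (∑ l, i l) := by
    simp only [Finset.sum_add_distrib, ← Finset.mul_sum]
    ring
  unfold qEG
  rw [h, qE_char, qE_char, qE_neg_one _ _ (hd.mul hb), qE_neg_one _ _ (hd.mul ha)]
  ring

theorem qE_qNum_bound (q y : ℝ) (h0 : 0 < q) (h1 : q < 1) (hy : 0 ≤ y) :
    |qNum q y| ≤ 1 / (1 - q) := by
  have h2 : q ^ y ≤ 1 := Real.rpow_le_one h0.le h1.le hy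
  have h3 : 0 < q ^ y := Real.rpow_pos_of_pos h0 y
  have h4 : 0 < 1 - q := by linarith
  unfold qNum
  rw [abs_of_nonneg (div_nonneg (by linarith) h4.le)]
  gcongr
  linarith

theorem qEG_summable {r d : ℕ} (χ : DirichletCharacter ℂ d) (n a b : ℕ) (ha0 : 0 < a)
    (q x : ℝ) (h0 : 0 < q) (h1 : q < 1) (hx : 0 < x) (j : Fin r → ℕ) :
    Summable (fun m => qEG χ n a b q x j m) := by
  have hs := (qE_summable_geom q h0 h1 r).mul_right ((1 / (1 - q)) ^ n)
  refine Summable.of_norm_bounded hs fun m => ?_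
  unfold qEG
  have hc : ∀ t : Fin r → ℕ, ‖∏ l, χ ((t l : ZMod d))‖ ≤ 1 := by
    intro t
    rw [norm_prod]
    exact Finset.prod_le_one (fun _ _ => norm_nonneg _) (fun _ _ => χ.norm_le_one _)
  have hp : q ^ (b * (∑ l, j l) + a * (∑ l, m l)) ≤ q ^ (∑ l, m l) := by
    apply pow_le_pow_of_le_one h0.le h1.le
    nlinarith [Nat.zero_le (b * (∑ l, j l)), Nat.zero_le (∑ l, m l)]
  have hq := qE_qNum_bound q (((b * (∑ l, j l) + a * (∑ l, m l) : ℕ) : ℝ) + a * b * x) h0 h1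
    (by positivity)
  simp only [norm_mul, norm_pow, norm_neg, norm_one, one_pow, one_mul, Complex.norm_real,
    Real.norm_eq_abs, abs_of_pos h0]
  have hcc := mul_le_one₀ (hc j) (norm_nonneg _) (hc m)
  calc _ ≤ 1 * q ^ (∑ l, m l) * (1 / (1 - q)) ^ n := by gcongr
    _ = _ := by ring

theorem qEG_main {r d : ℕ} (χ : DirichletCharacter ℂ d) (n a b : ℕ) (ha0 : 0 < a) (hb0 : 0 < b)
    (q x : ℝ) (h0 : 0 < q) (h1 : q < 1) (hx : 0 < x)
    (ha : Odd a) (hb : Odd b) (hd : Odd d) :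
    ∑ j ∈ Fintype.piFinset (fun _ : Fin r => Finset.range (d * a)),
        ∑' m, qEG χ n a b q x j m =
      ∑ i ∈ Fintype.piFinset (fun _ : Fin r => Finset.range (d * b)),
        ∑' m, qEG χ n b a q x i m := by
  rw [Finset.sum_congr rfl fun j _ => qE_split (d * b) r (Nat.mul_pos hd.pos hb0) _
      (qEG_summable χ n a b ha0 q x h0 h1 hx j),
    Finset.sum_congr (g := fun i => ∑ j ∈ Fintype.piFinset (fun _ : Fin r => Finset.range (d * a)),
      ∑' k : Fin r → ℕ, qEG χ n b a q x i (fun l => j l + d * a * k l)) rfl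
      fun i _ => qE_split (d * a) r (Nat.mul_pos hd.pos ha0) _
      (qEG_summable χ n b a hb0 q x h0 h1 hx i), Finset.sum_comm]
  refine Finset.sum_congr rfl fun i _ => Finset.sum_congr rfl fun j _ => tsum_congr fun k => ?_
  rw [qEG_shift χ n a b q x ha hb hd, qEG_symm]

theorem qE_qNum_mul (q y : ℝ) (a : ℕ) (ha0 : 0 < a) (h0 : 0 < q) (h1 : q < 1) :
    qNum q a * qNum (q ^ a) y = qNum q (a * y) := by
  have h2 : q ^ a < 1 := pow_lt_one₀ h0.le h1 ha0.ne'
  have h3 : 1 - q ^ a ≠ 0 := by linarith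
  have h4 : 1 - q ≠ 0 := by linarith
  unfold qNum
  rw [Real.rpow_mul h0.le, Real.rpow_natCast]
  field_simp

theorem qE_side {r d : ℕ} (χ : DirichletCharacter ℂ d) (n a b : ℕ) (ha0 : 0 < a)
    (q x : ℝ) (h0 : 0 < q) (h1 : q < 1) :
    ((qNum (q ^ b) 2 : ℝ) : ℂ) ^ r * ((qNum q a : ℝ) : ℂ) ^ n *
      ∑ j ∈ Fintype.piFinset (fun _ : Fin r => Finset.range (d * a)),
        ((-1 : ℂ) ^ (∑ l, j l) * (∏ l, χ ((j l : ZMod d))) * (q : ℂ) ^ (b * ∑ l, j l) *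
          qEuler r χ (q ^ a) n (b * x + ((b : ℝ) / a) * (∑ l, j l))) =
    ((qNum (q ^ b) 2 : ℝ) : ℂ) ^ r * ((qNum (q ^ a) 2 : ℝ) : ℂ) ^ r *
      ∑ j ∈ Fintype.piFinset (fun _ : Fin r => Finset.range (d * a)),
        ∑' m, qEG χ n a b q x j m := by
  rw [mul_assoc, mul_assoc]
  congr 1
  rw [Finset.mul_sum, Finset.mul_sum]
  refine Finset.sum_congr rfl fun j _ => ?_
  unfold qEuler
  rw [mul_left_comm _ (_ ^ r), mul_left_comm _ (_ ^ r)]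
  congr 1
  rw [← tsum_mul_left, ← tsum_mul_left]
  refine tsum_congr fun m => ?_
  have hy : (((b * (∑ l, j l) + a * (∑ l, m l) : ℕ) : ℝ) + a * b * x) =
      a * ((∑ i, m i : ℕ) + (b * x + ((b : ℝ) / a) * (∑ l, j l : ℕ))) := by
    have : (a : ℝ) ≠ 0 := by positivity
    push_cast
    field_simp
    ring
  unfold qEG
  rw [hy, ← qE_qNum_mul q _ a ha0 h0 h1, Complex.ofReal_mul, mul_pow, pow_add, pow_mul _ a,
    neg_pow ((q ^ a : ℝ) : ℂ)]
  push_cast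
  ring

/-- Theorem 2: symmetry identity for the generalized higher-order `q`-Euler polynomials. -/
theorem symmetry_qEuler (n : ℕ) (a b : ℕ) (ha0 : 0 < a) (ha : Odd a) (hb0 : 0 < b) (hb : Odd b)
    (q : ℝ) (hq0 : 0 < q) (hq1 : q < 1) (x : ℝ) (hx : 0 < x)
    (r : ℕ) (hr : 0 < r) (d : ℕ) (hd : Odd d) (χ : DirichletCharacter ℂ d) :
    ((qNum (q ^ b) 2 : ℝ) : ℂ) ^ r * ((qNum q a : ℝ) : ℂ) ^ n *
      ∑ j ∈ Fintype.piFinset (fun _ : Fin r => Finset.range (d * a)),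
        ((-1 : ℂ) ^ (∑ l, j l) * (∏ l, χ ((j l : ZMod d))) * (q : ℂ) ^ (b * ∑ l, j l) *
          qEuler r χ (q ^ a) n (b * x + ((b : ℝ) / a) * (∑ l, j l))) =
    ((qNum (q ^ a) 2 : ℝ) : ℂ) ^ r * ((qNum q b : ℝ) : ℂ) ^ n *
      ∑ j ∈ Fintype.piFinset (fun _ : Fin r => Finset.range (d * b)),
        ((-1 : ℂ) ^ (∑ l, j l) * (∏ l, χ ((j l : ZMod d))) * (q : ℂ) ^ (a * ∑ l, j l) *
          qEuler r χ (q ^ b) n (a * x + ((a : ℝ) / b) * (∑ l, j l))) := by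
  rw [qE_side χ n a b ha0 q x hq0 hq1, qE_side χ n b a hb0 q x hq0 hq1,
    qEG_main χ n a b ha0 hb0 q x hq0 hq1 hx ha hb hd]
  ring
end

section
/- For every nonnegative integer n, odd positive integers a and b, real q with 0<q<1, real x, a positive integer r, and a Dirichlet character χ of odd conductor d: [2]_{q^b}^r Σ_{i=0}^{n} C(n,i) [a]_q^{n-i} [b]_q^{i} E^{(r)}_{n-i,χ,q^a}(bx) S^{(r)}_{n,i,q^b}(ad|χ) = [2]_{q^a}^r Σ_{i=0}^{n} C(n,i) [b]_q^{n-i} [a]_q^{i} E^{(r)}_{n-i,χ,q^b}(ax) S^{(r)}_{n,i,q^a}(bd|χ), where C(n,i) is the binomial coefficient. -/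
open scoped BigOperators

/-- base term -/
noncomputable def qT (q x : ℝ) (n a b M J : ℕ) : ℂ :=
  (-1 : ℂ) ^ (M + J) * (q : ℂ) ^ (a * M + b * J) *
    ((qNum q ((a * M + b * J : ℕ) + a * b * x) : ℝ) : ℂ) ^ n

lemma summable_pi_geom (p : ℝ) (hp0 : 0 ≤ p) (hp1 : p < 1) (r : ℕ) :
    Summable (fun m : Fin r → ℕ => p ^ (∑ i, m i)) := by
  induction r with
  | zero => exact (hasSum_fintype _).summable
  | succ r ih =>
    rw [← (Fin.consEquiv (fun _ : Fin (r+1) => ℕ)).summable_iff]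
    have h1 := summable_geometric_of_lt_one hp0 hp1
    have h2 := h1.mul_of_nonneg ih (fun _ => by positivity) (fun _ => by positivity)
    refine h2.congr ?_
    rintro ⟨k, m⟩
    simp [Fin.consEquiv, Fin.sum_univ_succ, pow_add]

lemma qNum_bound (p : ℝ) (hp0 : 0 < p) (hp1 : p < 1) (x : ℝ) (M : ℕ) :
    |qNum p (M + x)| ≤ (1 + p ^ x) / (1 - p) := by
  unfold qNum
  rw [abs_div, abs_of_pos (by linarith : 0 < 1 - p)]
  have h : 0 < 1 - p := by linarith
  gcongr
  have h1 : p ^ ((M : ℝ) + x) ≤ p ^ x :=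
    Real.rpow_le_rpow_of_exponent_ge hp0 hp1.le (by have : (0:ℝ) ≤ M := by positivity
                                                    linarith)
  have h2 : 0 < p ^ ((M : ℝ) + x) := Real.rpow_pos_of_pos hp0 _
  rw [abs_le]; constructor <;> linarith

lemma summable_euler (r d : ℕ) (χ : DirichletCharacter ℂ d) (p : ℝ) (hp0 : 0 < p) (hp1 : p < 1)
    (k : ℕ) (x : ℝ) :
    Summable (fun m : Fin r → ℕ => ‖((-(p : ℂ)) ^ (∑ i, m i) * (∏ i, χ ((m i : ZMod d))) *
        ((qNum p ((∑ i, m i : ℕ) + x) : ℝ) : ℂ) ^ k)‖) := by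
  refine Summable.of_nonneg_of_le (fun _ => norm_nonneg _) ?_
    ((summable_pi_geom p hp0.le hp1 r).mul_right (((1 + p ^ x) / (1 - p)) ^ k))
  intro m
  rw [norm_mul, norm_mul, norm_pow, norm_neg, norm_pow, Complex.norm_real, Complex.norm_real,
    Real.norm_of_nonneg hp0.le, Real.norm_eq_abs, norm_prod]
  have h1 : ∏ i, ‖χ ((m i : ZMod d))‖ ≤ 1 :=
    Finset.prod_le_one (fun _ _ => norm_nonneg _) (fun _ _ => χ.norm_le_one _)
  have h2 := qNum_bound p hp0 hp1 x (∑ i, m i)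
  have h3 : 0 ≤ ∏ i, ‖χ ((m i : ZMod d))‖ := Finset.prod_nonneg (fun _ _ => norm_nonneg _)
  calc _ ≤ p ^ (∑ i, m i) * 1 * ((1 + p ^ x) / (1 - p)) ^ k := by gcongr
    _ = _ := by ring

lemma qNum_mul (q : ℝ) (hq0 : 0 < q) (hq1 : q < 1) (a : ℕ) (ha : 0 < a) (y : ℝ) :
    qNum q a * qNum (q ^ a) y = qNum q (a * y) := by
  unfold qNum
  have h1 : q ^ a < 1 := pow_lt_one₀ hq0.le hq1 ha.ne'
  rw [Real.rpow_natCast, Real.rpow_natCast_mul hq0.le]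
  have : 1 - q ^ a ≠ 0 := by linarith
  have : 1 - q ≠ 0 := by linarith
  field_simp

lemma qNum_add (q : ℝ) (hq0 : 0 < q) (K : ℕ) (y : ℝ) :
    qNum q K + q ^ K * qNum q y = qNum q (K + y) := by
  unfold qNum
  rw [Real.rpow_add hq0, Real.rpow_natCast]
  ring

lemma qT_eq (q x : ℝ) (hq0 : 0 < q) (hq1 : q < 1) (n a b M J : ℕ) (ha : 0 < a) (hb : 0 < b) :
    ∑ i ∈ Finset.range (n + 1),
      (n.choose i : ℂ) * ((qNum q a : ℝ) : ℂ) ^ (n - i) * ((qNum q b : ℝ) : ℂ) ^ i *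
      ((-((q ^ a : ℝ) : ℂ)) ^ M * ((qNum (q ^ a) (M + b * x) : ℝ) : ℂ) ^ (n - i)) *
      ((-1 : ℂ) ^ J * ((q ^ b : ℝ) : ℂ) ^ (J * (n - i + 1)) * ((qNum (q ^ b) J : ℝ) : ℂ) ^ i)
    = qT q x n a b M J := by
  have e : qNum q ((a * M + b * J : ℕ) + a * b * x)
      = qNum q b * qNum (q ^ b) J + q ^ (b * J) * (qNum q a * qNum (q ^ a) (M + b * x)) := by
    rw [qNum_mul q hq0 hq1 a ha, qNum_mul q hq0 hq1 b hb, ← Nat.cast_mul b J, qNum_add q hq0]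
    congr 1; push_cast; ring
  unfold qT
  rw [e, Complex.ofReal_add, add_pow, Finset.mul_sum]
  refine Finset.sum_congr rfl fun i _ => ?_
  rw [neg_pow]
  push_cast
  simp only [mul_pow, pow_add, mul_add, pow_mul, mul_one]
  simp only [← pow_mul]
  ring

lemma qS_eq (r d : ℕ) (χ : DirichletCharacter ℂ d) (n i : ℕ) (q : ℝ) (A : ℕ) :
    qS r χ n i q A = ∑' j : Fin r → Fin A, ((-1 : ℂ) ^ (∑ l, (j l : ℕ)) *
      (∏ l, χ (((j l : ℕ) : ZMod d))) *
      (q : ℂ) ^ ((∑ l, (j l : ℕ)) * (n - i + 1)) *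
      ((qNum q ((∑ l, (j l : ℕ) : ℕ)) : ℝ) : ℂ) ^ i) := by
  rw [tsum_fintype]
  unfold qS
  symm
  refine Finset.sum_bij (fun j _ l => (j l : ℕ)) ?_ ?_ ?_ ?_
  · intro j _; simp
  · intro j _ k _ h; funext l; exact Fin.ext (congrFun h l)
  · intro j hj
    simp only [Fintype.mem_piFinset, Finset.mem_range] at hj
    exact ⟨fun l => ⟨j l, hj l⟩, Finset.mem_univ _, rfl⟩
  · intro j _; rfl

/-- the doubled term -/
noncomputable def qG (q x : ℝ) (n a b r d : ℕ) (χ : DirichletCharacter ℂ d) (m j : Fin r → ℕ) : ℂ :=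
  (∏ l, χ ((m l : ZMod d))) * (∏ l, χ ((j l : ZMod d))) * qT q x n a b (∑ l, m l) (∑ l, j l)

lemma key (n a b : ℕ) (ha : 0 < a) (hb : 0 < b) (q : ℝ) (hq0 : 0 < q) (hq1 : q < 1) (x : ℝ)
    (r d A : ℕ) (χ : DirichletCharacter ℂ d) :
    ∑ i ∈ Finset.range (n + 1),
        ((n.choose i : ℂ) * ((qNum q a : ℝ) : ℂ) ^ (n - i) * ((qNum q b : ℝ) : ℂ) ^ i *
          qEuler r χ (q ^ a) (n - i) (b * x) * qS r χ n i (q ^ b) A) =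
    ((qNum (q ^ a) 2 : ℝ) : ℂ) ^ r *
      ∑' z : (Fin r → ℕ) × (Fin r → Fin A), qG q x n a b r d χ z.1 (fun l => (z.2 l : ℕ)) := by
  have hpa0 : 0 < q ^ a := pow_pos hq0 a
  have hpa1 : q ^ a < 1 := pow_lt_one₀ hq0.le hq1 ha.ne'
  have hS := fun i => summable_euler r d χ (q ^ a) hpa0 hpa1 (n - i) (b * x)
  have hF : ∀ g : (Fin r → Fin A) → ℂ, Summable (fun j => ‖g j‖) :=
    fun g => (hasSum_fintype _).summable
  have hG : ∀ z : (Fin r → ℕ) × (Fin r → Fin A), qG q x n a b r d χ z.1 (fun l => (z.2 l : ℕ)) =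
      ∑ i ∈ Finset.range (n + 1),
        ((n.choose i : ℂ) * ((qNum q a : ℝ) : ℂ) ^ (n - i) * ((qNum q b : ℝ) : ℂ) ^ i) *
        ((((-((q ^ a : ℝ) : ℂ)) ^ (∑ i, z.1 i) * (∏ i, χ ((z.1 i : ZMod d))) *
        ((qNum (q ^ a) ((∑ i, z.1 i : ℕ) + b * x) : ℝ) : ℂ) ^ (n - i))) *
        ((-1 : ℂ) ^ (∑ l, (z.2 l : ℕ)) *
      (∏ l, χ (((z.2 l : ℕ) : ZMod d))) *
      ((q ^ b : ℝ) : ℂ) ^ ((∑ l, (z.2 l : ℕ)) * (n - i + 1)) *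
      ((qNum (q ^ b) ((∑ l, (z.2 l : ℕ) : ℕ)) : ℝ) : ℂ) ^ i)) := by
    intro z
    unfold qG
    rw [← qT_eq q x hq0 hq1 n a b _ _ ha hb, Finset.mul_sum]
    refine Finset.sum_congr rfl fun i _ => ?_
    ring
  rw [tsum_congr hG, Summable.tsum_finsetSum, Finset.mul_sum]
  · refine Finset.sum_congr rfl fun i _ => ?_
    rw [tsum_mul_left, qS_eq, qEuler, ← tsum_mul_tsum_of_summable_norm (hS i) (hF (fun j : Fin r → Fin A => ((-1 : ℂ) ^ (∑ l, (j l : ℕ)) *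
      (∏ l, χ (((j l : ℕ) : ZMod d))) *
      ((q ^ b : ℝ) : ℂ) ^ ((∑ l, (j l : ℕ)) * (n - i + 1)) *
      ((qNum (q ^ b) ((∑ l, (j l : ℕ) : ℕ)) : ℝ) : ℂ) ^ i)))]
    ring
  · intro i _
    exact (summable_mul_of_summable_norm (hS i) (hF (fun j : Fin r → Fin A => ((-1 : ℂ) ^ (∑ l, (j l : ℕ)) *
      (∏ l, χ (((j l : ℕ) : ZMod d))) *
      ((q ^ b : ℝ) : ℂ) ^ ((∑ l, (j l : ℕ)) * (n - i + 1)) *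
      ((qNum (q ^ b) ((∑ l, (j l : ℕ) : ℕ)) : ℝ) : ℂ) ^ i)))).mul_left _

/-- coordinatewise reindexing -/
def reidx (r A B : ℕ) (hA : 0 < A) (hB : 0 < B) :
    (Fin r → ℕ) × (Fin r → Fin A) ≃ (Fin r → ℕ) × (Fin r → Fin B) where
  toFun z := (fun l => z.2 l + A * (z.1 l / B), fun l => ⟨z.1 l % B, Nat.mod_lt _ hB⟩)
  invFun z := (fun l => z.2 l + B * (z.1 l / A), fun l => ⟨z.1 l % A, Nat.mod_lt _ hA⟩)
  left_inv z := by
    ext l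
    · simp [Nat.add_mul_div_left _ _ hA, Nat.div_eq_of_lt (z.2 l).2, Nat.mod_add_div]
    · simp [Nat.mod_eq_of_lt (z.2 l).2]
  right_inv z := by
    ext l
    · simp [Nat.add_mul_div_left _ _ hB, Nat.div_eq_of_lt (z.2 l).2, Nat.mod_add_div]
    · simp [Nat.mod_eq_of_lt (z.2 l).2]

lemma qT_swap (q x : ℝ) (n a b M J M' J' : ℕ) (h : a * M + b * J = b * M' + a * J')
    (hp : (-1 : ℂ) ^ (M + J) = (-1) ^ (M' + J')) : qT q x n a b M J = qT q x n b a M' J' := by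
  unfold qT
  rw [h, hp, mul_comm (a : ℝ) b]

lemma tsum_swap (n a b : ℕ) (ha0 : 0 < a) (ha : Odd a) (hb0 : 0 < b) (hb : Odd b) (q x : ℝ)
    (r d : ℕ) (hd : Odd d) (χ : DirichletCharacter ℂ d) :
    ∑' z : (Fin r → ℕ) × (Fin r → Fin (a * d)), qG q x n a b r d χ z.1 (fun l => (z.2 l : ℕ)) =
    ∑' z : (Fin r → ℕ) × (Fin r → Fin (b * d)), qG q x n b a r d χ z.1 (fun l => (z.2 l : ℕ)) := by
  rw [← (reidx r (a * d) (b * d) (Nat.mul_pos ha0 hd.pos) (Nat.mul_pos hb0 hd.pos)).tsum_eq]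
  refine tsum_congr fun z => ?_
  obtain ⟨m, j⟩ := z
  simp only [reidx, Equiv.coe_fn_mk, qG]
  have c1 : ∀ l, (((j l : ℕ) + a * d * (m l / (b * d)) : ℕ) : ZMod d) = ((j l : ℕ) : ZMod d) := by
    intro l; simp
  have c2 : ∀ l, ((m l % (b * d) : ℕ) : ZMod d) = ((m l : ℕ) : ZMod d) := by
    intro l
    conv_rhs => rw [← Nat.mod_add_div (m l) (b * d)]
    simp
  simp only [c1, c2]
  rw [mul_comm (∏ l, χ ((m l : ZMod d)))]
  congr 1
  apply qT_swap
  · simp only [Finset.mul_sum, ← Finset.sum_add_distrib]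
    refine Finset.sum_congr rfl fun l _ => ?_
    conv_lhs => rw [← Nat.mod_add_div (m l) (b * d)]
    ring
  · simp only [← Finset.sum_add_distrib, ← Finset.prod_pow_eq_pow_sum]
    refine Finset.prod_congr rfl fun l _ => ?_
    conv_lhs => rw [← Nat.mod_add_div (m l) (b * d)]
    simp only [pow_add, pow_mul, ha.neg_one_pow, hb.neg_one_pow, hd.neg_one_pow]
    ring

/-- Theorem 3: symmetry identity relating the generalized higher-order `q`-Euler
polynomials and the `q`-power sums. -/
theorem symmetry_qEuler_qS (n : ℕ) (a b : ℕ) (ha0 : 0 < a) (ha : Odd a) (hb0 : 0 < b)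
    (hb : Odd b) (q : ℝ) (hq0 : 0 < q) (hq1 : q < 1) (x : ℝ)
    (r : ℕ) (hr : 0 < r) (d : ℕ) (hd : Odd d) (χ : DirichletCharacter ℂ d) :
    ((qNum (q ^ b) 2 : ℝ) : ℂ) ^ r *
      ∑ i ∈ Finset.range (n + 1),
        ((n.choose i : ℂ) * ((qNum q a : ℝ) : ℂ) ^ (n - i) * ((qNum q b : ℝ) : ℂ) ^ i *
          qEuler r χ (q ^ a) (n - i) (b * x) * qS r χ n i (q ^ b) (a * d)) =
    ((qNum (q ^ a) 2 : ℝ) : ℂ) ^ r *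
      ∑ i ∈ Finset.range (n + 1),
        ((n.choose i : ℂ) * ((qNum q b : ℝ) : ℂ) ^ (n - i) * ((qNum q a : ℝ) : ℂ) ^ i *
          qEuler r χ (q ^ b) (n - i) (a * x) * qS r χ n i (q ^ a) (b * d)) := by
  rw [key n a b ha0 hb0 q hq0 hq1, key n b a hb0 ha0 q hq0 hq1,
    tsum_swap n a b ha0 ha hb0 hb q x r d hd χ]
  ring
end

section
/- For real q with 0<q<1, a positive integer r, a Dirichlet character χ of odd conductor d, a nonnegative integer n, and real x, the generalized q-Euler polynomial satisfies E^{(r)}_{n,χ,q}(x) = Σ_{l=0}^{n} C(n,l) q^{l·x} E^{(r)}_{l,χ,q}(0) [x]_q^{n-l}, where C(n,l) is the binomial coefficient. -/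
open scoped BigOperators

theorem aux_summable (q : ℝ) (hq0 : 0 < q) (hq1 : q < 1) (r : ℕ) :
    Summable (fun m : Fin r → ℕ => q ^ (∑ i, m i)) := by
  induction r with
  | zero => exact Summable.of_finite
  | succ r ih =>
    have h1 : Summable (fun p : ℕ × (Fin r → ℕ) => q ^ p.1 * q ^ (∑ i, p.2 i)) :=
      Summable.mul_of_nonneg (f := fun k : ℕ => q ^ k)
        (g := fun m : Fin r → ℕ => q ^ (∑ i, m i))
        (summable_geometric_of_lt_one hq0.le hq1) ih
        (fun k => pow_nonneg hq0.le _) (fun m => pow_nonneg hq0.le _)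
    rw [← (Fin.consEquiv (fun _ : Fin (r+1) => ℕ)).summable_iff]
    refine h1.congr fun p => ?_
    simp [Fin.consEquiv, Fin.sum_univ_succ, pow_add]

theorem aux_term (q : ℝ) (hq0 : 0 < q) (hq1 : q < 1)
    (r : ℕ) (d : ℕ) (χ : DirichletCharacter ℂ d) (l : ℕ) :
    Summable (fun m : Fin r → ℕ =>
      ((-(q : ℂ)) ^ (∑ i, m i) * (∏ i, χ ((m i : ZMod d))) *
        ((qNum q ((∑ i, m i : ℕ) + 0) : ℝ) : ℂ) ^ l)) := by
  refine Summable.of_norm_bounded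
    ((aux_summable q hq0 hq1 r).mul_right ((1 / (1 - q)) ^ l)) fun m => ?_
  have hb : |qNum q ((∑ i, m i : ℕ) + 0)| ≤ 1 / (1 - q) := by
    have h1 : 0 < 1 - q := by linarith
    have h2 : q ^ (∑ i, m i) ≤ 1 := pow_le_one₀ hq0.le hq1.le
    have h3 : 0 < q ^ (∑ i, m i) := by positivity
    rw [qNum, add_zero, Real.rpow_natCast, abs_of_nonneg (div_nonneg (by linarith) h1.le)]
    gcongr
    linarith
  have hc : ‖∏ i, χ ((m i : ZMod d))‖ ≤ 1 := by
    rw [norm_prod]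
    exact Finset.prod_le_one (fun _ _ => norm_nonneg _) fun i _ => χ.norm_le_one _
  rw [norm_mul, norm_mul, norm_pow, norm_pow, norm_neg, Complex.norm_real, Complex.norm_real,
    Real.norm_eq_abs, Real.norm_eq_abs, abs_of_pos hq0]
  have : q ^ (∑ i, m i) * ‖∏ i, χ ((m i : ZMod d))‖ ≤ q ^ (∑ i, m i) :=
    mul_le_of_le_one_right (by positivity) hc
  gcongr

theorem aux_qNum (q : ℝ) (hq0 : 0 < q) (hq1 : q < 1) (m x : ℝ) :
    qNum q (m + x) = q ^ x * qNum q (m + 0) + qNum q x := by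
  have h1 : 1 - q ≠ 0 := by linarith
  rw [qNum, qNum, qNum, Real.rpow_add hq0, add_zero]
  field_simp
  ring

/-- Equation (5): expansion of the generalized `q`-Euler polynomial in terms of the
generalized `q`-Euler numbers. -/
theorem qEuler_eq_sum_qEuler_num (q : ℝ) (hq0 : 0 < q) (hq1 : q < 1)
    (r : ℕ) (hr : 0 < r) (d : ℕ) (hd : Odd d) (χ : DirichletCharacter ℂ d)
    (n : ℕ) (x : ℝ) :
    qEuler r χ q n x =
      ∑ l ∈ Finset.range (n + 1),
        ((n.choose l : ℂ) * ((q ^ ((l : ℝ) * x) : ℝ) : ℂ) * qEuler r χ q l 0 *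
          ((qNum q x : ℝ) : ℂ) ^ (n - l)) := by
  have hs := fun l => aux_term q hq0 hq1 r d χ l
  have key : ∀ m : Fin r → ℕ,
      ((-(q : ℂ)) ^ (∑ i, m i) * (∏ i, χ ((m i : ZMod d))) *
        ((qNum q ((∑ i, m i : ℕ) + x) : ℝ) : ℂ) ^ n) =
      ∑ l ∈ Finset.range (n + 1),
        ((n.choose l : ℂ) * ((q ^ ((l : ℝ) * x) : ℝ) : ℂ) * ((qNum q x : ℝ) : ℂ) ^ (n - l)) *
        ((-(q : ℂ)) ^ (∑ i, m i) * (∏ i, χ ((m i : ZMod d))) *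
        ((qNum q ((∑ i, m i : ℕ) + 0) : ℝ) : ℂ) ^ l) := by
    intro m
    rw [aux_qNum q hq0 hq1, Complex.ofReal_add, add_pow, Finset.mul_sum]
    refine Finset.sum_congr rfl fun l _ => ?_
    have : q ^ ((l : ℝ) * x) = (q ^ x) ^ l := by
      rw [mul_comm, Real.rpow_mul hq0.le, Real.rpow_natCast]
    rw [this, Complex.ofReal_mul, Complex.ofReal_pow, mul_pow]
    ring
  unfold qEuler
  rw [tsum_congr key, Summable.tsum_finsetSum (fun l _ => (hs l).mul_left _), Finset.mul_sum]
  refine Finset.sum_congr rfl fun l _ => ?_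
  rw [tsum_mul_left]
  ring
end

section
/- For odd positive integers a and b, real q with 0<q<1, real x>0, a complex number s, a positive integer r, and a Dirichlet character χ of odd conductor d: ([b]_q^s/[2]_{q^a}^r) · Σ_{j_1,...,j_r=0}^{da-1} (-1)^{j_1+⋯+j_r} (Π_{l=1}^r χ(j_l)) q^{b(j_1+⋯+j_r)} l_{q^a,r}(s, bx + (b/a)(j_1+⋯+j_r) | χ) = [a]_q^s [b]_q^s Σ_{i_1,...,i_r=0}^{db-1} Σ_{j_1,...,j_r=0}^{da-1} Σ_{n_1,...,n_r=0}^∞ (-1)^{Σ_l(i_l+n_l+j_l)} (Π_{l=1}^r χ(j_l)χ(i_l)) q^{Σ_l(a·i_l+b·j_l+a·b·d·n_l)} · [ab(x + d·Σ_l n_l) + Σ_l(b·j_l + a·i_l)]_q^{-s}, where all complex powers of positive reals are principal. -/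
open scoped BigOperators

theorem qNum_pos' {q y : ℝ} (hq0 : 0 < q) (hq1 : q < 1) (hy : 0 < y) : 0 < qNum q y := by
  unfold qNum
  have := Real.rpow_lt_one hq0.le hq1 hy
  exact div_pos (by linarith) (by linarith)

theorem qNum_pow' {q y : ℝ} (hq0 : 0 < q) (hq1 : q < 1) (a : ℕ) (ha : 0 < a) :
    qNum (q ^ a) y = qNum q (a * y) / qNum q a := by
  unfold qNum
  have h1 : q ^ a < 1 := pow_lt_one₀ hq0.le hq1 ha.ne'
  rw [Real.rpow_mul hq0.le, Real.rpow_natCast]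
  have h2 : 1 - q ^ a ≠ 0 := by linarith
  have h3 : 1 - q ≠ 0 := by linarith
  field_simp

theorem summable_pow_sum (q : ℝ) (hq0 : 0 ≤ q) (hq1 : q < 1) (r : ℕ) :
    Summable (fun m : Fin r → ℕ => q ^ (∑ i, m i)) := by
  induction r with
  | zero => exact Summable.of_finite
  | succ n ih =>
    rw [← (Fin.consEquiv (fun _ : Fin (n + 1) => ℕ)).summable_iff]
    have := (summable_geometric_of_lt_one hq0 hq1).mul_of_nonneg ih
      (fun _ => pow_nonneg hq0 _) (fun _ => pow_nonneg hq0 _)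
    refine this.congr ?_
    intro p
    simp [Fin.consEquiv, Fin.sum_univ_succ, pow_add]

noncomputable def splitEquiv (r k : ℕ) (hk : 0 < k) :
    (Fintype.piFinset (fun _ : Fin r => Finset.range k)) × (Fin r → ℕ) ≃ (Fin r → ℕ) where
  toFun p := fun l => p.1.1 l + k * p.2 l
  invFun m := (⟨fun l => m l % k, by simp [Nat.mod_lt _ hk]⟩, fun l => m l / k)
  left_inv := by
    rintro ⟨⟨i, hi⟩, n⟩
    have hi' : ∀ l, i l < k := by simpa using hi
    ext l
    · simp [Nat.mod_eq_of_lt (hi' l)]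
    · simp [Nat.add_mul_div_left _ _ hk, Nat.div_eq_of_lt (hi' l)]
  right_inv := by
    intro m
    ext l
    simp [Nat.mod_add_div]

theorem tsum_split (r k : ℕ) (hk : 0 < k) (f : (Fin r → ℕ) → ℂ) (hf : Summable f) :
    ∑' m, f m = ∑ i ∈ Fintype.piFinset (fun _ : Fin r => Finset.range k),
      ∑' n : Fin r → ℕ, f (fun l => i l + k * n l) := by
  rw [← (splitEquiv r k hk).tsum_eq f, Summable.tsum_prod, tsum_fintype]
  · exact Finset.sum_coe_sort _ (fun i : Fin r → ℕ => ∑' n : Fin r → ℕ, f (fun l => i l + k * n l))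
  · exact (splitEquiv r k hk).summable_iff.2 hf

theorem pull_const {α β : Type*} (c w t c' : ℂ) (S : Finset α) (F G : α → β → ℂ)
    (ht : t ≠ 0) (h : ∀ i n, c * (w * F i n) = c' * G i n) :
    c / t * (w * (t * ∑ i ∈ S, ∑' n, F i n)) = c' * ∑ i ∈ S, ∑' n, G i n := by
  have e : ∀ z : ℂ, c / t * (w * (t * z)) = c * (w * z) := by
    intro z; field_simp
  rw [e]
  simp only [Finset.mul_sum, ← tsum_mul_left, h]

theorem qL_summable (q : ℝ) (hq0 : 0 < q) (hq1 : q < 1) (r : ℕ) {d : ℕ}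
    (χ : DirichletCharacter ℂ d) (s : ℂ) (x : ℝ) (hx : 0 < x) :
    Summable (fun m : Fin r → ℕ => ((-(q : ℂ)) ^ (∑ i, m i) * (∏ i, χ ((m i : ZMod d))) *
        ((qNum q ((∑ i, m i : ℕ) + x) : ℝ) : ℂ) ^ (-s))) := by
  obtain ⟨C, hC⟩ : ∃ C : ℝ, ∀ n : ℕ, ‖((qNum q (n + x) : ℝ) : ℂ) ^ (-s)‖ ≤ C := by
    have hc : ContinuousOn (fun t : ℝ => t ^ (-s).re) (Set.Icc (qNum q x) (1 / (1 - q))) := by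
      intro t ht
      exact (Real.continuousAt_rpow_const _ _
        (Or.inl (lt_of_lt_of_le (qNum_pos' hq0 hq1 hx) ht.1).ne')).continuousWithinAt
    obtain ⟨C, hC⟩ := isCompact_Icc.exists_bound_of_continuousOn hc
    refine ⟨C, fun n => ?_⟩
    have hp : 0 < (n : ℝ) + x := by positivity
    rw [Complex.norm_cpow_eq_rpow_re_of_pos (qNum_pos' hq0 hq1 hp)]
    refine (le_abs_self _).trans (hC _ ⟨?_, ?_⟩)
    · unfold qNum
      have := Real.rpow_le_rpow_of_exponent_ge hq0 hq1.le (show x ≤ n + x by simp)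
      have h1 : 0 < 1 - q := by linarith
      gcongr
    · unfold qNum
      have := Real.rpow_pos_of_pos hq0 (n + x)
      have h1 : 0 < 1 - q := by linarith
      gcongr
      linarith
  refine Summable.of_norm_bounded ((summable_pow_sum q hq0.le hq1 r).mul_right C) ?_
  intro m
  rw [norm_mul, norm_mul, norm_pow, norm_neg, Complex.norm_real, Real.norm_of_nonneg hq0.le,
    norm_prod]
  have h1 : ∏ i, ‖χ ((m i : ZMod d))‖ ≤ 1 :=
    Finset.prod_le_one (fun _ _ => norm_nonneg _) (fun _ _ => χ.norm_le_one _)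
  have h2 := hC (∑ i, m i)
  have h3 : 0 ≤ q ^ (∑ i, m i) := by positivity
  calc _ ≤ (q ^ (∑ i, m i) * 1) * C := by gcongr
    _ = _ := by ring

/-- Equation (7): the twisted multiple sum expression for the weighted sum of
multiple `q`-`l`-functions. -/
theorem qL_triple_sum (a b : ℕ) (ha0 : 0 < a) (ha : Odd a) (hb0 : 0 < b) (hb : Odd b)
    (q : ℝ) (hq0 : 0 < q) (hq1 : q < 1) (x : ℝ) (hx : 0 < x) (s : ℂ)
    (r : ℕ) (hr : 0 < r) (d : ℕ) (hd : Odd d) (χ : DirichletCharacter ℂ d) :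
    (((qNum q b : ℝ) : ℂ) ^ s / ((qNum (q ^ a) 2 : ℝ) : ℂ) ^ r) *
      ∑ j ∈ Fintype.piFinset (fun _ : Fin r => Finset.range (d * a)),
        ((-1 : ℂ) ^ (∑ l, j l) * (∏ l, χ ((j l : ZMod d))) * (q : ℂ) ^ (b * ∑ l, j l) *
          qL (q ^ a) r χ s (b * x + ((b : ℝ) / a) * (∑ l, j l))) =
    ((qNum q a : ℝ) : ℂ) ^ s * ((qNum q b : ℝ) : ℂ) ^ s *
      ∑ i ∈ Fintype.piFinset (fun _ : Fin r => Finset.range (d * b)),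
        ∑ j ∈ Fintype.piFinset (fun _ : Fin r => Finset.range (d * a)),
          ∑' m : Fin r → ℕ,
            ((-1 : ℂ) ^ (∑ l, (i l + m l + j l)) *
              (∏ l, χ ((j l : ZMod d)) * χ ((i l : ZMod d))) *
              (q : ℂ) ^ (∑ l, (a * i l + b * j l + a * b * d * m l)) *
              ((qNum q ((a : ℝ) * b * (x + (d : ℝ) * ∑ l, m l) +
                ∑ l, ((b : ℝ) * j l + (a : ℝ) * i l)) : ℝ) : ℂ) ^ (-s)) := by
  have hd0 : 0 < d := hd.pos
  have hQ0 : 0 < q ^ a := pow_pos hq0 a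
  have hQ1 : q ^ a < 1 := pow_lt_one₀ hq0.le hq1 ha0.ne'
  have h2 : ((qNum (q ^ a) 2 : ℝ) : ℂ) ^ r ≠ 0 :=
    pow_ne_zero _ (Complex.ofReal_ne_zero.2 (qNum_pos' hQ0 hQ1 two_pos).ne')
  have haR : (0 : ℝ) < a := by exact_mod_cast ha0
  have hbR : (0 : ℝ) < b := by exact_mod_cast hb0
  have hA : 0 < qNum q a := qNum_pos' hq0 hq1 haR
  rw [Finset.sum_comm, Finset.mul_sum, Finset.mul_sum]
  refine Finset.sum_congr rfl fun j _ => ?_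
  have hy : 0 < (b : ℝ) * x + ((b : ℝ) / a) * ((∑ l, j l : ℕ) : ℝ) := by positivity
  unfold qL
  rw [tsum_split r (d * b) (by positivity) _ (qL_summable (q ^ a) hQ0 hQ1 r χ s _ (by exact_mod_cast hy))]
  refine pull_const _ _ _ _ _ _ _ h2 fun i n => ?_
  have e1 : qNum (q ^ a) (((∑ l, (i l + d * b * n l) : ℕ) : ℝ) +
      ((b : ℝ) * x + ((b : ℝ) / a) * ((∑ l, j l : ℕ) : ℝ))) =
      qNum q ((a : ℝ) * b * (x + (d : ℝ) * ((∑ l, n l : ℕ) : ℝ)) +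
                ∑ l, ((b : ℝ) * j l + (a : ℝ) * i l)) / qNum q a := by
    rw [qNum_pow' hq0 hq1 a ha0]
    congr 2
    push_cast
    simp only [Finset.sum_add_distrib, ← Finset.mul_sum]
    field_simp
    ring
  have hz : 0 < (a : ℝ) * b * (x + (d : ℝ) * ((∑ l, n l : ℕ) : ℝ)) +
                ∑ l, ((b : ℝ) * j l + (a : ℝ) * i l) := by positivity
  have hZ := qNum_pos' hq0 hq1 hz
  have e2 : ∀ l : Fin r, χ (((i l + d * b * n l : ℕ)) : ZMod d) = χ ((i l : ZMod d)) := by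
    intro l; congr 1; simp
  have e3 : (-((q ^ a : ℝ) : ℂ)) ^ (∑ l, (i l + d * b * n l)) =
      (-1) ^ (∑ l, i l) * (-1) ^ (∑ l, n l) *
        (q : ℂ) ^ (a * ∑ l, i l) * (q : ℂ) ^ (a * b * d * ∑ l, n l) := by
    rw [neg_pow, Finset.sum_add_distrib, ← Finset.mul_sum, pow_add (-1 : ℂ), pow_mul (-1 : ℂ),
      (hd.mul hb).neg_one_pow]
    push_cast
    rw [← pow_mul]
    ring
  have e4 : (q : ℂ) ^ (∑ l, (a * i l + b * j l + a * b * d * n l)) =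
      (q : ℂ) ^ (a * ∑ l, i l) * (q : ℂ) ^ (b * ∑ l, j l) * (q : ℂ) ^ (a * b * d * ∑ l, n l) := by
    simp only [Finset.sum_add_distrib, ← Finset.mul_sum, pow_add]
  have e5 : (-1 : ℂ) ^ (∑ l, (i l + n l + j l)) =
      (-1) ^ (∑ l, i l) * (-1) ^ (∑ l, n l) * (-1) ^ (∑ l, j l) := by
    simp only [Finset.sum_add_distrib, pow_add]
  have e6 : ∀ Z : ℝ, 0 < Z → ((Z / qNum q a : ℝ) : ℂ) ^ (-s) =
      ((qNum q a : ℝ) : ℂ) ^ s * (Z : ℂ) ^ (-s) := by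
    intro Z hZ
    rw [div_eq_mul_inv, Complex.ofReal_mul,
      Complex.mul_cpow_ofReal_nonneg hZ.le (inv_nonneg.2 hA.le), Complex.ofReal_inv,
      Complex.inv_cpow _ _ (by rw [Complex.arg_ofReal_of_nonneg hA.le]; exact Real.pi_pos.ne),
      Complex.cpow_neg (qNum q a : ℂ), inv_inv, mul_comm]
  push_cast at e1 hZ
  push_cast at e3
  push_cast
  simp only [Nat.cast_add, Nat.cast_mul] at e2
  rw [e1, e6 _ hZ, e3, e4, e5, Finset.prod_mul_distrib, Finset.prod_congr rfl (fun l _ => e2 l)]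
  ring
end
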